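/- arXiv:1510.01236 — 2 statements merged into one kernel-verified Lean document; each statement's English description precedes it below -/
import Mathlib

section
/- Let d and M be positive integers, λ > 0, T > 0, C ≥ 0, let u, h : ℝ^d → ℝ^d both be Lipschitz continuous with constant C, and let X be an ℕ-valued random variable with the Poisson distribution with parameter λT/M. Then for every real number p ≥ 1, every z ∈ {−1, 1} and every x ∈ ℝ^d with ‖x‖ ≥ 1, E[exp(p·z·⟨x + (T/M)·u(x), h(x)⟩·‖x‖^{−2}·(X − λT/M))] ≤ exp((e^{κ} + κ)·λT/M), where κ = p·(C + ‖h(0)‖)·(1 + TC + T‖u(0)‖). -/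
open MeasureTheory
open scoped RealInnerProductSpace

/-!
For `X` Poisson with parameter `m` and `a : ℝ`, the compensated exponential moment is
`E[exp (a (X - m))] = exp (m (e^a - 1 - a))`; only the inequality `≤` is needed
(`integral_exp_compensated_poisson_le`). The coefficient
`a = p z ⟨x + (T/M) u(x), h(x)⟩ ‖x‖⁻²` satisfies `|a| ≤ κ` by Cauchy–Schwarz, the linear growth
of Lipschitz maps and `‖x‖ ≥ 1` (`abs_inner_div_sq_le`), so `e^a - 1 - a ≤ e^κ + κ`.

The random variable `X` is not assumed measurable, so `P {X = k}` is a priori an outer measure.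
This is harmless: an upper bound on the integral is obtained by covering each `{X = k}`
by a measurable set of the same measure.
-/

/-- Series form of the compensated Poisson exponential moment. -/
lemma hasSum_exp_compensated_poisson (m a : ℝ) :
    HasSum (fun k : ℕ => Real.exp (a * ((k : ℝ) - m))
        * (Real.exp (-m) * m ^ k / (Nat.factorial k)))
      (Real.exp (m * (Real.exp a - 1 - a))) := by
  have h := (NormedSpace.expSeries_div_hasSum_exp (m * Real.exp a)).mul_left
    (Real.exp (-(a * m) - m))
  rw [← Real.exp_eq_exp_ℝ, ← Real.exp_add] at h
  have hf : (fun k : ℕ => Real.exp (a * ((k : ℝ) - m))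
      * (Real.exp (-m) * m ^ k / (Nat.factorial k)))
      = fun k => Real.exp (-(a * m) - m) * ((m * Real.exp a) ^ k / (Nat.factorial k)) := by
    funext k
    have e1 : Real.exp (a * ((k : ℝ) - m)) = Real.exp (-(a * m)) * Real.exp a ^ k := by
      rw [← Real.exp_nat_mul, ← Real.exp_add]
      ring_nf
    rw [e1, mul_pow, sub_eq_add_neg, Real.exp_add]
    ring
  rw [hf, show m * (Real.exp a - 1 - a) = -(a * m) - m + m * Real.exp a by ring]
  exact h

/-- An ℕ-valued map, measurable or not, satisfies `∫⁻ f ∘ X ≤ ∑ f k * P {X = k}`, with `P` read as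
an outer measure. -/
lemma lintegral_comp_nat_le_tsum {Ω : Type*} [MeasurableSpace Ω] (P : Measure Ω)
    (X : Ω → ℕ) (f : ℕ → ENNReal) :
    ∫⁻ ω, f (X ω) ∂P ≤ ∑' k, f k * P {ω | X ω = k} := by
  calc ∫⁻ ω, f (X ω) ∂P
      ≤ ∫⁻ ω, ∑' k, (toMeasurable P {ω | X ω = k}).indicator (fun _ => f k) ω ∂P := by
        refine lintegral_mono fun ω => ?_
        refine le_trans ?_ (ENNReal.le_tsum (X ω))
        have hmem : ω ∈ toMeasurable P {η | X η = X ω} := subset_toMeasurable P _ rfl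
        rw [Set.indicator_of_mem hmem]
    _ = ∑' k, f k * P {ω | X ω = k} := by
        rw [lintegral_tsum fun k =>
          (measurable_const.indicator (measurableSet_toMeasurable _ _)).aemeasurable]
        refine tsum_congr fun k => ?_
        rw [lintegral_indicator_const (measurableSet_toMeasurable _ _), measure_toMeasurable]

lemma integral_exp_compensated_poisson_le {Ω : Type*} [MeasurableSpace Ω] (P : Measure Ω)
    (X : Ω → ℕ) (m : ℝ) (hm : 0 ≤ m)
    (hX : ∀ k : ℕ, P {ω | X ω = k}
      = ENNReal.ofReal (Real.exp (-m) * m ^ k / (Nat.factorial k))) (a : ℝ) :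
    ∫ ω, Real.exp (a * ((X ω : ℝ) - m)) ∂P ≤ Real.exp (m * (Real.exp a - 1 - a)) := by
  by_cases hint : Integrable (fun ω => Real.exp (a * ((X ω : ℝ) - m))) P
  · rw [integral_eq_lintegral_of_nonneg_ae (Filter.Eventually.of_forall fun _ => by positivity)
      hint.aestronglyMeasurable]
    refine ENNReal.toReal_le_of_le_ofReal (Real.exp_pos _).le ?_
    refine (lintegral_comp_nat_le_tsum P X
      (fun k => ENNReal.ofReal (Real.exp (a * ((k : ℝ) - m))))).trans_eq ?_
    have hs := hasSum_exp_compensated_poisson m a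
    rw [← hs.tsum_eq, ENNReal.ofReal_tsum_of_nonneg (fun k => by positivity) hs.summable]
    refine tsum_congr fun k => ?_
    rw [hX, ENNReal.ofReal_mul (Real.exp_pos _).le]
  · rw [integral_undef hint]
    positivity

lemma norm_le_of_lipschitz {E : Type*} [NormedAddCommGroup E] {C : ℝ} {f : E → E}
    (hf : ∀ x y, ‖f x - f y‖ ≤ C * ‖x - y‖) {x : E} (hx : 1 ≤ ‖x‖) :
    ‖f x‖ ≤ (C + ‖f 0‖) * ‖x‖ := by
  have h1 := hf x 0
  have h2 : ‖f x‖ ≤ ‖f x - f 0‖ + ‖f 0‖ := by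
    simpa using norm_add_le (f x - f 0) (f 0)
  rw [sub_zero] at h1
  nlinarith [norm_nonneg (f 0)]

lemma abs_inner_div_sq_le {E : Type*} [NormedAddCommGroup E] [InnerProductSpace ℝ E]
    {C T t : ℝ} (ht : 0 ≤ t) (htT : t ≤ T) {u h : E → E}
    (hu : ∀ x y, ‖u x - u y‖ ≤ C * ‖x - y‖) (hh : ∀ x y, ‖h x - h y‖ ≤ C * ‖x - y‖)
    {x : E} (hx : 1 ≤ ‖x‖) :
    |⟪x + t • u x, h x⟫ / ‖x‖ ^ 2| ≤ (C + ‖h 0‖) * (1 + T * C + T * ‖u 0‖) := by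
  have hT : 0 ≤ T := ht.trans htT
  have hu' := norm_le_of_lipschitz hu hx
  have hh' := norm_le_of_lipschitz hh hx
  have h1 : ‖x + t • u x‖ ≤ (1 + T * C + T * ‖u 0‖) * ‖x‖ := by
    calc ‖x + t • u x‖ ≤ ‖x‖ + t * ‖u x‖ := by
          refine (norm_add_le _ _).trans_eq ?_
          rw [norm_smul, Real.norm_of_nonneg ht]
      _ ≤ ‖x‖ + T * ((C + ‖u 0‖) * ‖x‖) := by gcongr
      _ = _ := by ring
  rw [abs_div, abs_of_nonneg (sq_nonneg ‖x‖), div_le_iff₀ (by positivity)]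
  calc |⟪x + t • u x, h x⟫| ≤ ‖x + t • u x‖ * ‖h x‖ := abs_real_inner_le_norm _ _
    _ ≤ ((1 + T * C + T * ‖u 0‖) * ‖x‖) * ((C + ‖h 0‖) * ‖x‖) :=
        mul_le_mul h1 hh' (norm_nonneg _) ((norm_nonneg _).trans h1)
    _ = _ := by ring

/-- If `u, h : ℝ^d → ℝ^d` are Lipschitz with constant `C` and `X` has the Poisson
distribution with parameter `λT/M`, then for `p ≥ 1`, `z ∈ {-1,1}` and `‖x‖ ≥ 1`,
`E[exp (p z ⟨x + (T/M) u(x), h(x)⟩ ‖x‖⁻² (X - λT/M))] ≤ exp ((e^κ + κ) λT/M)`,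
where `κ = p (C + ‖h 0‖)(1 + TC + T‖u 0‖)`. -/
theorem poisson_semi_taming_exp_bound (d M : ℕ) (hd : 0 < d) (hM : 0 < M)
    (lam T C : ℝ) (hlam : 0 < lam) (hT : 0 < T) (hC : 0 ≤ C)
    (u h : EuclideanSpace ℝ (Fin d) → EuclideanSpace ℝ (Fin d))
    (hu : ∀ x y, ‖u x - u y‖ ≤ C * ‖x - y‖)
    (hh : ∀ x y, ‖h x - h y‖ ≤ C * ‖x - y‖)
    {Ω : Type*} [MeasurableSpace Ω] (P : Measure Ω) [IsProbabilityMeasure P]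
    (X : Ω → ℕ)
    (hX : ∀ k : ℕ, P {ω | X ω = k}
      = ENNReal.ofReal (Real.exp (-(lam * T / M)) * (lam * T / M) ^ k / (Nat.factorial k)))
    (p : ℝ) (hp : 1 ≤ p) (z : ℝ) (hz : z = -1 ∨ z = 1)
    (x : EuclideanSpace ℝ (Fin d)) (hx : 1 ≤ ‖x‖)
    (κ : ℝ) (hκ : κ = p * (C + ‖h 0‖) * (1 + T * C + T * ‖u 0‖)) :
    (∫ ω, Real.exp (p * z * (⟪x + (T / M) • u x, h x⟫ / ‖x‖ ^ 2)
        * ((X ω : ℝ) - lam * T / M)) ∂P)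
      ≤ Real.exp ((Real.exp κ + κ) * (lam * T / M)) := by
  have hM1 : (1 : ℝ) ≤ M := by exact_mod_cast hM
  have hm : 0 ≤ lam * T / M := by positivity
  refine (integral_exp_compensated_poisson_le P X _ hm hX _).trans ?_
  set a : ℝ := p * z * (⟪x + (T / M) • u x, h x⟫ / ‖x‖ ^ 2) with ha
  have haκ : |a| ≤ κ := by
    have hz1 : |z| = 1 := by rcases hz with rfl | rfl <;> simp
    rw [ha, abs_mul, abs_mul, hz1, mul_one, abs_of_nonneg (by linarith : 0 ≤ p), hκ, mul_assoc]
    exact mul_le_mul_of_nonneg_left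
      (abs_inner_div_sq_le (by positivity) (div_le_self hT.le hM1) hu hh hx) (by linarith)
  have h1 : Real.exp a ≤ Real.exp κ := Real.exp_le_exp.2 ((le_abs_self a).trans haκ)
  have h2 : -a ≤ κ := (neg_le_abs a).trans haκ
  rw [Real.exp_le_exp, mul_comm]
  exact mul_le_mul_of_nonneg_right (by linarith) hm
end

section
/- Let a, b, c, λ, Δt be real numbers with λ > 0 and Δt > 0; set A = a + λc and l = 2a + b² + λc(2 + c), and assume l < 0. On a probability space, for each n ∈ ℕ let Y_n and ΔW_n be real random variables and ΔN_n an ℕ-valued random variable such that: ΔW_n has law gaussianReal 0 Δt; ΔN_n has the Poisson distribution with parameter λΔt; the three random variables Y_n, ΔW_n, ΔN_n are mutually independent; E[Y_n²] < ∞; and almost surely Y_{n+1} = Y_n + a·Y_n·Δt + λc·Y_n·Δt + b·Y_n·ΔW_n + c·Y_n·(ΔN_n − λΔt) (the semi-tamed Euler scheme applied to the linear test equation, whose taming term vanishes for a linear drift). Then E[Y_{n+1}²] = (1 + A²Δt² + lΔt)·E[Y_n²] for every n, hence E[Y_n²] = (1 + A²Δt² + lΔt)ⁿ·E[Y_0²];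 moreover 1 + A²Δt² + lΔt < 1 if and only if A²Δt < −l, i.e. the semi-tamed Euler scheme is mean-square stable if and only if A²Δt < −l. -/
/-!
Almost surely `Y (n + 1) = Y n * R n`, where `R n = 1 + A Δt + b ΔW + c (ΔN - λ Δt)` depends only on
the increments and so is independent of `Y n`; hence `E[Y (n + 1)²] = E[Y n²] * E[R n²]`.
The increments `ΔW` and `ΔN - λ Δt` are centred, independent, and have variances `Δt` and `λ Δt`,
so `E[R n²] = (1 + A Δt)² + b² Δt + c² λ Δt = 1 + A² Δt² + l Δt`
(`integral_sq_affine_of_indepFun`).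

The hypotheses do not literally say that the increments are measurable. For `ΔW` this follows
from its law being a nonzero measure. For `ΔN` only the outer measures of the level sets are given;
since they add up to one, the level sets are null measurable
(`nullMeasurableSet_of_measure_add_compl_le`), and `ΔN` is a.e. measurable with Poisson law
(`aemeasurable_of_poisson_weights`, `map_eq_poissonMeasure`). The variables `Y n` may fail to be
measurable, but only `Y n ^ 2` enters the argument.
-/

open MeasureTheory ProbabilityTheory
open scoped NNReal Nat

/-- A set whose outer measure and that of its complement add up to at most the total mass is null
measurable: the measurable hulls of the two sets overlap only in a null set. -/
lemma nullMeasurableSet_of_measure_add_compl_le {Ω : Type*} [MeasurableSpace Ω] {P : Measure Ω}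
    [IsFiniteMeasure P] {s : Set Ω} (h : P s + P sᶜ ≤ P Set.univ) : NullMeasurableSet s P := by
  have hs := subset_toMeasurable P s
  have hsc := subset_toMeasurable P sᶜ
  have hunion : toMeasurable P s ∪ toMeasurable P sᶜ = Set.univ :=
    Set.eq_univ_of_forall fun x => by
      by_cases hx : x ∈ s
      · exact Or.inl (hs hx)
      · exact Or.inr (hsc hx)
  have hsum := measure_union_add_inter (μ := P) (toMeasurable P s) (measurableSet_toMeasurable P sᶜ)
  rw [hunion, measure_toMeasurable, measure_toMeasurable] at hsum
  have hzero : P (toMeasurable P s ∩ toMeasurable P sᶜ) = 0 := by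
    rw [← hsum] at h
    have h' : P Set.univ + P (toMeasurable P s ∩ toMeasurable P sᶜ) ≤ P Set.univ + 0 := by
      simpa using h
    exact nonpos_iff_eq_zero.1 (ENNReal.le_of_add_le_add_left (measure_ne_top P _) h')
  have hdiff : P (toMeasurable P s \ s) = 0 :=
    measure_mono_null (Set.inter_subset_inter_right _ hsc) hzero
  refine ⟨toMeasurable P s, measurableSet_toMeasurable P s, ?_⟩
  exact (LE.le.eventuallyLE hs).antisymm (ae_le_set.2 hdiff)

/-- A map to `ℕ` whose level sets have Poisson outer measures is a.e. measurable, because these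
outer measures leave no excess over the total mass. -/
lemma aemeasurable_of_poisson_weights {Ω : Type*} [MeasurableSpace Ω] {P : Measure Ω}
    [IsProbabilityMeasure P] {N : Ω → ℕ} {r : ℝ≥0}
    (hN : ∀ k, P {ω | N ω = k} = poissonMeasure r {k}) : AEMeasurable N P := by
  have hle : ∀ s : Set ℕ, P (N ⁻¹' s) ≤ poissonMeasure r s := fun s => by
    have h1 : N ⁻¹' s = ⋃ k ∈ s, {ω | N ω = k} := by ext; simp
    have h2 : poissonMeasure r s = ∑' k : s, poissonMeasure r {(k : ℕ)} := by
      conv_lhs => rw [← Set.biUnion_of_singleton s]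
      exact measure_biUnion s.to_countable
        (fun i _ j _ hij => Set.disjoint_singleton.2 hij) fun _ _ => .of_discrete
    rw [h1, h2]
    exact (measure_biUnion_le P s.to_countable _).trans_eq (by simp only [hN])
  have hnull : NullMeasurable N P := fun s _ => by
    apply nullMeasurableSet_of_measure_add_compl_le
    rw [← Set.preimage_compl]
    calc P (N ⁻¹' s) + P (N ⁻¹' sᶜ) ≤ poissonMeasure r s + poissonMeasure r sᶜ :=
          add_le_add (hle s) (hle sᶜ)
      _ = P Set.univ := by
          rw [measure_add_measure_compl (.of_discrete : MeasurableSet s), measure_univ,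
            measure_univ]
  exact hnull.aemeasurable

lemma map_eq_poissonMeasure {Ω : Type*} [MeasurableSpace Ω] {P : Measure Ω}
    [IsProbabilityMeasure P] {N : Ω → ℕ} {r : ℝ≥0}
    (hN : ∀ k, P {ω | N ω = k} = poissonMeasure r {k}) : P.map N = poissonMeasure r := by
  refine Measure.ext_of_singleton fun k => ?_
  rw [Measure.map_apply_of_aemeasurable (aemeasurable_of_poisson_weights hN) .of_discrete, ← hN k]
  rfl

/-- The mean of the Poisson distribution, from `(k + 1) r ^ (k + 1) / (k + 1)! = r * r ^ k / k!`. -/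
lemma hasSum_poisson_first_moment (r : ℝ≥0) :
    HasSum (fun n : ℕ => Real.exp (-r) * r ^ n / n ! * (n : ℝ)) r := by
  rw [← hasSum_nat_add_iff' 1]
  convert! (hasSum_one_poissonMeasure r).mul_left (r : ℝ) using 1
  · ext n
    rw [Nat.factorial_succ]
    push_cast
    field_simp
    ring
  · simp

/-- The second moment of the Poisson distribution, by the same index shift as for the mean. -/
lemma hasSum_poisson_second_moment (r : ℝ≥0) :
    HasSum (fun n : ℕ => Real.exp (-r) * r ^ n / n ! * (n : ℝ) ^ 2) (r * (r + 1)) := by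
  rw [← hasSum_nat_add_iff' 1]
  convert! ((hasSum_poisson_first_moment r).add (hasSum_one_poissonMeasure r)).mul_left (r : ℝ)
    using 1
  · ext n
    rw [Nat.factorial_succ]
    push_cast
    field_simp
    ring
  · simp

lemma integrable_natCast_sq_poissonMeasure (r : ℝ≥0) :
    Integrable (fun n : ℕ => (n : ℝ) ^ 2) (poissonMeasure r) := by
  rw [integrable_poissonMeasure_iff]
  simpa using (hasSum_poisson_second_moment r).summable

lemma memLp_natCast_poissonMeasure (r : ℝ≥0) :
    MemLp (fun n : ℕ => (n : ℝ)) 2 (poissonMeasure r) :=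
  (memLp_two_iff_integrable_sq Measurable.of_discrete.aestronglyMeasurable).2
    (integrable_natCast_sq_poissonMeasure r)

lemma integral_natCast_poissonMeasure (r : ℝ≥0) :
    ∫ n : ℕ, (n : ℝ) ∂poissonMeasure r = r := by
  rw [integral_poissonMeasure]
  exact (hasSum_poisson_first_moment r).tsum_eq

lemma integral_natCast_sq_poissonMeasure (r : ℝ≥0) :
    ∫ n : ℕ, (n : ℝ) ^ 2 ∂poissonMeasure r = r * (r + 1) := by
  rw [integral_poissonMeasure]
  exact (hasSum_poisson_second_moment r).tsum_eq

lemma variance_natCast_poissonMeasure (r : ℝ≥0) :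
    Var[fun n : ℕ => (n : ℝ); poissonMeasure r] = r := by
  rw [variance_eq_sub (memLp_natCast_poissonMeasure r), integral_natCast_poissonMeasure]
  simp only [Pi.pow_apply]
  rw [integral_natCast_sq_poissonMeasure]
  ring

/-- The second moment of an affine combination of independent random variables, as variance plus
squared mean. -/
lemma integral_sq_affine_of_indepFun {Ω : Type*} [MeasurableSpace Ω] {P : Measure Ω}
    [IsProbabilityMeasure P] {X Z : Ω → ℝ} (hX : MemLp X 2 P) (hZ : MemLp Z 2 P)
    (hXZ : IndepFun X Z P) (κ β γ : ℝ) :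
    ∫ ω, (β * X ω + γ * Z ω + κ) ^ 2 ∂P
      = β ^ 2 * Var[X; P] + γ ^ 2 * Var[Z; P] + (β * P[X] + γ * P[Z] + κ) ^ 2 := by
  have hβ := hX.const_mul β
  have hγ := hZ.const_mul γ
  have hsum : MemLp (fun ω => β * X ω + γ * Z ω) 2 P := hβ.add hγ
  have hall : MemLp (fun ω => β * X ω + γ * Z ω + κ) 2 P := hsum.add (memLp_const κ)
  have hind : IndepFun (fun ω => β * X ω) (fun ω => γ * Z ω) P :=
    hXZ.comp (measurable_const_mul β) (measurable_const_mul γ)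
  have hvar : Var[fun ω => β * X ω + γ * Z ω + κ; P] = β ^ 2 * Var[X; P] + γ ^ 2 * Var[Z; P] := by
    rw [variance_add_const hsum.aestronglyMeasurable, hind.variance_fun_add hβ hγ,
      variance_const_mul, variance_const_mul]
  have hmean : ∫ ω, (β * X ω + γ * Z ω + κ) ∂P = β * P[X] + γ * P[Z] + κ := by
    rw [integral_add (hsum.integrable one_le_two) (integrable_const κ),
      integral_add (hβ.integrable one_le_two) (hγ.integrable one_le_two), integral_const_mul,
      integral_const_mul]
    simp
  have h := variance_eq_sub hall
  rw [hvar, hmean] at h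
  simp only [Pi.pow_apply] at h
  linarith

/-- Mean-square stability of the semi-tamed Euler scheme for the linear jump test
equation: with `A = a + λc` and `l = 2a + b² + λc(2+c) < 0`, one has
`E[Y_{n+1}²] = (1 + A²Δt² + lΔt) E[Y_n²]`, hence
`E[Y_n²] = (1 + A²Δt² + lΔt)ⁿ E[Y_0²]`; moreover `1 + A²Δt² + lΔt < 1 ↔ A²Δt < -l`,
i.e. the scheme is mean-square stable iff `A²Δt < -l`. -/
theorem semi_tamed_linear_mean_square_stability
    (a b c lam Δt : ℝ) (hlam : 0 < lam) (hΔt : 0 < Δt)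
    (A l : ℝ) (hA : A = a + lam * c) (hl : l = 2 * a + b ^ 2 + lam * c * (2 + c))
    (hlneg : l < 0)
    {Ω : Type*} [MeasurableSpace Ω] (P : Measure Ω) [IsProbabilityMeasure P]
    (Y W : ℕ → Ω → ℝ) (N : ℕ → Ω → ℕ)
    (hWlaw : ∀ n, Measure.map (W n) P = gaussianReal 0 (Real.toNNReal Δt))
    (hNlaw : ∀ n (k : ℕ), P {ω | N n ω = k}
      = ENNReal.ofReal (Real.exp (-(lam * Δt)) * (lam * Δt) ^ k / (Nat.factorial k)))
    (hWN : ∀ n, IndepFun (W n) (N n) P)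
    (hYWN : ∀ n, IndepFun (Y n) (fun ω => (W n ω, N n ω)) P)
    (hint : ∀ n, Integrable (fun ω => (Y n ω) ^ 2) P)
    (hrec : ∀ n, ∀ᵐ ω ∂P,
      Y (n + 1) ω = Y n ω + a * Y n ω * Δt + lam * c * Y n ω * Δt
        + b * Y n ω * W n ω + c * Y n ω * ((N n ω : ℝ) - lam * Δt)) :
    (∀ n, (∫ ω, (Y (n + 1) ω) ^ 2 ∂P)
        = (1 + A ^ 2 * Δt ^ 2 + l * Δt) * ∫ ω, (Y n ω) ^ 2 ∂P) ∧
    (∀ n, (∫ ω, (Y n ω) ^ 2 ∂P)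
        = (1 + A ^ 2 * Δt ^ 2 + l * Δt) ^ n * ∫ ω, (Y 0 ω) ^ 2 ∂P) ∧
    (1 + A ^ 2 * Δt ^ 2 + l * Δt < 1 ↔ A ^ 2 * Δt < -l) := by
  have hstep : ∀ n, (∫ ω, (Y (n + 1) ω) ^ 2 ∂P)
      = (1 + A ^ 2 * Δt ^ 2 + l * Δt) * ∫ ω, (Y n ω) ^ 2 ∂P := by
    intro n
    have hr : ((lam * Δt).toNNReal : ℝ) = lam * Δt := Real.coe_toNNReal _ (by positivity)
    have hNlaw' : ∀ k, P {ω | N n ω = k} = poissonMeasure (lam * Δt).toNNReal {k} := fun k => by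
      rw [hNlaw n k, poissonMeasure_singleton, hr]
    have hNm := aemeasurable_of_poisson_weights hNlaw'
    have hNmap := map_eq_poissonMeasure hNlaw'
    have hWm : AEMeasurable (W n) P :=
      aemeasurable_of_map_neZero (by rw [hWlaw n]; infer_instance)
    have hcast : ∀ f : ℕ → ℝ, AEStronglyMeasurable f (P.map (N n)) := fun f =>
      Measurable.of_discrete.aestronglyMeasurable
    have hW2 : MemLp (W n) 2 P := by
      have h := memLp_id_gaussianReal' (μ := 0) (v := Δt.toNNReal) 2 (by simp)
      rw [← hWlaw n] at h
      exact (memLp_map_measure_iff aestronglyMeasurable_id hWm).1 h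
    have hN2 : MemLp (fun ω => (N n ω : ℝ)) 2 P := by
      have h := memLp_natCast_poissonMeasure (lam * Δt).toNNReal
      rw [← hNmap] at h
      exact (memLp_map_measure_iff (hcast _) hNm).1 h
    have hWmean : P[W n] = 0 := by
      have h := integral_id_gaussianReal (μ := 0) (v := Δt.toNNReal)
      rwa [← hWlaw n, integral_map hWm (f := fun x => x) aestronglyMeasurable_id] at h
    have hWvar : Var[W n; P] = Δt := by
      rw [← variance_id_map hWm, hWlaw n, variance_id_gaussianReal, Real.coe_toNNReal _ hΔt.le]
    have hNmean : ∫ ω, (N n ω : ℝ) ∂P = lam * Δt := by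
      have h := integral_natCast_poissonMeasure (lam * Δt).toNNReal
      rwa [← hNmap, integral_map hNm (hcast _), hr] at h
    have hNvar : Var[fun ω => (N n ω : ℝ); P] = lam * Δt := by
      have h := variance_natCast_poissonMeasure (lam * Δt).toNNReal
      rwa [← hNmap, variance_map (hcast _).aemeasurable hNm, hr] at h
    have hindWN : IndepFun (W n) (fun ω => (N n ω : ℝ)) P :=
      (hWN n).comp measurable_id (.of_discrete : Measurable (Nat.cast : ℕ → ℝ))
    -- The amplification factor of one step, as a function of the two increments.
    let R : ℝ × ℕ → ℝ := fun p => b * p.1 + c * (p.2 : ℝ) + (1 + A * Δt - c * (lam * Δt))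
    have hR : Measurable R := by fun_prop
    have hfactor : ∫ ω, (Y (n + 1) ω) ^ 2 ∂P = ∫ ω, Y n ω ^ 2 * R (W n ω, N n ω) ^ 2 ∂P := by
      refine integral_congr_ae ?_
      filter_upwards [hrec n] with ω hω
      rw [hω]
      simp only [R]
      rw [hA]
      ring
    have hind : IndepFun (fun ω => Y n ω ^ 2) (fun ω => R (W n ω, N n ω) ^ 2) P :=
      (hYWN n).comp (measurable_id.pow_const 2) (hR.pow_const 2)
    have hRsq : ∫ ω, R (W n ω, N n ω) ^ 2 ∂P = 1 + A ^ 2 * Δt ^ 2 + l * Δt := by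
      simp only [R]
      rw [integral_sq_affine_of_indepFun hW2 hN2 hindWN, hWmean, hWvar, hNmean, hNvar, hl, hA]
      ring
    rw [hfactor, hind.integral_fun_mul_eq_mul_integral (hint n).aestronglyMeasurable
      ((hR.comp_aemeasurable (hWm.prodMk hNm)).pow_const 2).aestronglyMeasurable, hRsq, mul_comm]
  refine ⟨hstep, fun n => ?_, ?_⟩
  · induction n with
    | zero => simp
    | succ k ih => rw [hstep k, ih]; ring
  · -- `A² Δt² + l Δt = (A² Δt + l) Δt` and `Δt > 0`.
    rw [show 1 + A ^ 2 * Δt ^ 2 + l * Δt = 1 + (A ^ 2 * Δt + l) * Δt by ring,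
      add_lt_iff_neg_left, mul_neg_iff]
    constructor
    · rintro (h | h) <;> linarith [h.1, h.2]
    · exact fun h => Or.inr ⟨by linarith, hΔt⟩
end
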